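/- Let p ∈ [1,∞), let ρ : ℝ^N → ℝ be continuous and strictly positive with ∫_{ℝ^N} ρ(x) dx = 1, and let β > 0. Let J ∈ C¹(ℝ^N) be nonnegative, even, supported in the closed unit ball with ∫ J = 1; let g ∈ C¹(ℝ) be globally Lipschitz with |g(s)| ≤ a for all s, g(0) = 0, and g' globally Lipschitz; let h : ℝ → [0,h*) be continuous. Fix ε > 0 and let S(t,τ)u_τ := u(t) denote the solution of u(t) = e^{−(t−τ)}u_τ + ∫_τ^t e^{−(t−s)} g(β(J*u(s)) + β h(s)) ds. Define, for t ∈ ℝ, A(t) := ⋂_{s ≤ t} closure(⋃_{τ ≤ s} S(t,τ)B(0,a+ε)), where B(0,a+ε) is the closed ball of radius a+ε in L^p(ℝ^N,ρ). Then for every t ∈ ℝ: (i) A(t) is a nonempty compact subset of L^p(ℝ^N,ρ) contained in the closed ball of radius a; (ii) A(t) pullback attracts bounded sets at time t, i.e. for every bounded D ⊆ L^p(ℝ^N,ρ), sup_{d ∈ D} dist(S(t,τ)d, A(t)) → 0 as τ → −∞, where dist is the distance from a point to the set A(t). -/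

import Mathlib

open MeasureTheory Set
open scoped ENNReal

noncomputable section

abbrev Euc (N : ℕ) := EuclideanSpace ℝ (Fin N)

/-- Weighted `L^p` norm `(∫ ρ |u|^p)^{1/p}`. -/
def wnorm {N : ℕ} (p : ℝ) (ρ u : Euc N → ℝ) : ℝ :=
  (∫ x, ρ x * |u x| ^ p) ^ (1 / p)

/-- Convolution `(J*u)(x) = ∫ J(x-y) u(y) dy`. -/
def conv {N : ℕ} (J u : Euc N → ℝ) (x : Euc N) : ℝ :=
  ∫ y, J (x - y) * u y

/-- Membership in the weighted Lebesgue space `L^p(ℝ^N, ρ)`. -/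
def MemWLp {N : ℕ} (p : ℝ) (ρ u : Euc N → ℝ) : Prop :=
  AEStronglyMeasurable u volume ∧ Integrable fun x => ρ x * |u x| ^ p

/-- `u` satisfies the variation-of-constants identity on `[τ, ∞)` with initial datum `uτ`. -/
def IsSolution {N : ℕ} (J : Euc N → ℝ) (g : ℝ → ℝ) (h : ℝ → ℝ → ℝ) (β τ : ℝ)
    (uτ : Euc N → ℝ) (u : ℝ → Euc N → ℝ) : Prop :=
  ∀ t ≥ τ, ∀ x, u t x = Real.exp (-(t - τ)) * uτ x +
    ∫ s in τ..t, Real.exp (-(t - s)) * g (β * conv J (u s) x + β * h s (u s x))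

/-- The weighted measure `ρ(x) dx` on `ℝ^N`. -/
def wMeasure {N : ℕ} (ρ : Euc N → ℝ) : Measure (Euc N) :=
  volume.withDensity fun x => ENNReal.ofReal (ρ x)

/-- The image at time `t` under the process of the closed ball of radius `r`
taken at initial time `τ`, i.e. `S(t,τ) B(0,r)`, as a subset of `L^p(ℝ^N,ρ)`. -/
def procSet {N : ℕ} (p : ℝ≥0∞) (ρ J : Euc N → ℝ) (g : ℝ → ℝ) (h : ℝ → ℝ)
    (β r t τ : ℝ) : Set (Lp ℝ p (wMeasure ρ)) :=
  {w | ∃ (u : ℝ → Euc N → ℝ) (uτ : Euc N → ℝ),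
      MemWLp p.toReal ρ uτ ∧ wnorm p.toReal ρ uτ ≤ r ∧
      (∀ t' ≥ τ, MemWLp p.toReal ρ (u t')) ∧
      IsSolution J g (fun s _ => h s) β τ uτ u ∧
      ⇑w =ᵐ[wMeasure ρ] u t}

/-- The pullback omega-limit set `A(t) = ⋂_{s ≤ t} closure (⋃_{τ ≤ s} S(t,τ) B(0,r))`. -/
def attrSet {N : ℕ} (p : ℝ≥0∞) [Fact (1 ≤ p)] (ρ J : Euc N → ℝ) (g : ℝ → ℝ) (h : ℝ → ℝ)
    (β r t : ℝ) : Set (Lp ℝ p (wMeasure ρ)) :=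
  ⋂ s ∈ Iic t, closure (⋃ τ ∈ Iic s, procSet p ρ J g h β r t τ)

/-!
A solution splits as `u(t) = e^{-(t-τ)} u_τ + v(t)` with `|v(t)| ≤ a` pointwise. The first part
decays in `L^p` as `τ → -∞`, uniformly for bounded data. On balls of data the functions `v(t)` are
equicontinuous on `ℝ^N`, because convolution with `J` turns bounds in `L¹(ρ)` into equicontinuity;
by Arzelà–Ascoli and dominated convergence, sequences of such `v(t)` have subsequences converging
in `L^p(ρ)`. So the process is pullback asymptotically compact and every bounded set is absorbed by
the ball of radius `a + ε`, which makes the pullback omega-limit set of that ball nonempty, compact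
and attracting.
-/

open Filter Topology
open scoped NNReal

section PullbackLimit

variable {ι X : Type*}

section Preorder

variable [Preorder ι]

lemma eventually_subset_biUnion_Iic (P : ι → Set X) (s : ι) :
    ∀ᶠ τ in atBot, P τ ⊆ ⋃ σ ∈ Iic s, P σ := by
  filter_upwards [Iic_mem_atBot s] with τ hτ using subset_biUnion_of_mem hτ

variable [TopologicalSpace X]

/-- The pullback omega-limit set at time `t` of a family `P`, where `P τ` is the image at time `t`
of the set from which the process is started at time `τ`. -/
def pullbackLimit (P : ι → Set X) (t : ι) : Set X :=
  ⋂ s ∈ Iic t, closure (⋃ τ ∈ Iic s, P τ)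

/-- Pullback asymptotic compactness of a family `P`, where `P τ` is the image at a fixed final time
of the set from which the process is started at time `τ`: points of `P (τ n)` with `τ n → -∞` have
a convergent subsequence. -/
def PullbackAsymptoticallyCompact (P : ι → Set X) : Prop :=
  ∀ (τ : ℕ → ι) (w : ℕ → X), Tendsto τ atTop atBot → (∀ n, w n ∈ P (τ n)) →
    ∃ x, ∃ φ : ℕ → ℕ, StrictMono φ ∧ Tendsto (w ∘ φ) atTop (𝓝 x)

lemma isClosed_pullbackLimit (P : ι → Set X) (t : ι) :
    IsClosed (pullbackLimit P t) :=
  isClosed_biInter fun _ _ => isClosed_closure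

lemma mem_pullbackLimit_of_tendsto {P Q : ι → Set X} {t : ι}
    (hQ : ∀ s ≤ t, ∀ᶠ τ in atBot, Q τ ⊆ ⋃ σ ∈ Iic s, P σ) {τ : ℕ → ι} {w : ℕ → X} {x : X}
    (hτ : Tendsto τ atTop atBot) (hw : ∀ n, w n ∈ Q (τ n)) (hx : Tendsto w atTop (𝓝 x)) :
    x ∈ pullbackLimit P t := by
  refine mem_iInter₂.2 fun s hs => mem_closure_of_tendsto hx ?_
  filter_upwards [hτ.eventually (hQ s hs)] with n hn using hn (hw n)

end Preorder

variable [LinearOrder ι]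

lemma pullbackLimit_subset_of_eventually [TopologicalSpace X] {P : ι → Set X} {C : Set X}
    (hC : IsClosed C) (hP : ∀ᶠ τ in atBot, P τ ⊆ C) (t : ι) : pullbackLimit P t ⊆ C := by
  have : Nonempty ι := ⟨t⟩
  obtain ⟨s, hs⟩ := eventually_atBot.1 hP
  refine (iInter₂_subset (min t s) (min_le_left t s)).trans (closure_minimal ?_ hC)
  exact iUnion₂_subset fun τ hτ => hs τ (le_trans hτ (min_le_right t s))

variable [IsCountablyGenerated (atBot : Filter ι)]

lemma PullbackAsymptoticallyCompact.nonempty_pullbackLimit [TopologicalSpace X] {P : ι → Set X}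
    (hP : PullbackAsymptoticallyCompact P) (hne : ∀ τ, (P τ).Nonempty) (t : ι) :
    (pullbackLimit P t).Nonempty := by
  have : Nonempty ι := ⟨t⟩
  obtain ⟨τ, hτ⟩ := exists_seq_tendsto (atBot : Filter ι)
  choose w hw using hne
  obtain ⟨x, φ, hφ, hx⟩ := hP τ (w ∘ τ) hτ fun n => hw (τ n)
  exact ⟨x, mem_pullbackLimit_of_tendsto (fun s _ => eventually_subset_biUnion_Iic P s)
    (hτ.comp hφ.tendsto_atTop) (fun n => hw (τ (φ n))) hx⟩

lemma PullbackAsymptoticallyCompact.isCompact_pullbackLimit [PseudoMetricSpace X] {P : ι → Set X}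
    (hP : PullbackAsymptoticallyCompact P) (t : ι) : IsCompact (pullbackLimit P t) := by
  have : Nonempty ι := ⟨t⟩
  refine IsSeqCompact.isCompact fun w hw => ?_
  obtain ⟨σ, hσ⟩ := exists_seq_tendsto (atBot : Filter ι)
  have happrox : ∀ n : ℕ, ∃ τ ≤ σ n, ∃ v ∈ P τ, dist (w n) v < 1 / ((n : ℝ) + 1) := by
    intro n
    have hwn := mem_iInter₂.1 (hw n) (min t (σ n)) (min_le_left _ _)
    obtain ⟨v, hv, hd⟩ := Metric.mem_closure_iff.1 hwn _ (Nat.one_div_pos_of_nat (α := ℝ) (n := n))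
    obtain ⟨τ, hτ, hv⟩ := mem_iUnion₂.1 hv
    exact ⟨τ, le_trans hτ (min_le_right _ _), v, hv, hd⟩
  choose τ hτ v hv hd using happrox
  obtain ⟨x, φ, hφ, hx⟩ := hP τ v (tendsto_atBot_mono hτ hσ) hv
  have hdist : Tendsto (fun n => dist (v n) (w n)) atTop (𝓝 0) :=
    squeeze_zero (fun _ => dist_nonneg) (fun n => (dist_comm _ _).trans_le (hd n).le)
      tendsto_one_div_add_atTop_nhds_zero_nat
  have hwx : Tendsto (w ∘ φ) atTop (𝓝 x) :=
    tendsto_of_tendsto_of_dist hx (hdist.comp hφ.tendsto_atTop)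
  exact ⟨x, (isClosed_pullbackLimit P t).mem_of_tendsto hwx (.of_forall fun n => hw (φ n)),
    φ, hφ, hwx⟩

lemma PullbackAsymptoticallyCompact.eventually_infDist_pullbackLimit_lt [PseudoMetricSpace X]
    {P Q : ι → Set X} {t : ι} (hQ : PullbackAsymptoticallyCompact Q)
    (hQP : ∀ s ≤ t, ∀ᶠ τ in atBot, Q τ ⊆ ⋃ σ ∈ Iic s, P σ) {δ : ℝ} (hδ : 0 < δ) :
    ∀ᶠ τ in atBot, ∀ w ∈ Q τ, Metric.infDist w (pullbackLimit P t) < δ := by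
  by_contra hfar
  obtain ⟨τ, hτ, hτfar⟩ := exists_seq_forall_of_frequently (not_eventually.1 hfar)
  push Not at hτfar
  choose w hw hdist using hτfar
  obtain ⟨x, φ, hφ, hx⟩ := hQ τ w hτ hw
  have hxmem : x ∈ pullbackLimit P t :=
    mem_pullbackLimit_of_tendsto hQP (hτ.comp hφ.tendsto_atTop) (fun n => hw (φ n)) hx
  have hlim := ((Metric.continuous_infDist_pt (pullbackLimit P t)).tendsto x).comp hx
  rw [Metric.infDist_zero_of_mem hxmem] at hlim
  exact hδ.not_ge (ge_of_tendsto hlim (.of_forall fun n => hdist (φ n)))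

end PullbackLimit

section Compactness

lemma exists_subseq_tendsto_of_equicontinuous {X α : Type*} [TopologicalSpace X]
    [TopologicalSpace.SeparableSpace X] [MetricSpace α] {f : ℕ → X → α}
    (hf : Equicontinuous f) {K : X → Set α} (hK : ∀ x, IsCompact (K x))
    (hfK : ∀ n x, f n x ∈ K x) :
    ∃ F : X → α, ∃ φ : ℕ → ℕ, StrictMono φ ∧ ∀ x, Tendsto (fun n => f (φ n) x) atTop (𝓝 (F x)) := by
  obtain ⟨S, hSc, hSd⟩ := TopologicalSpace.exists_countable_dense X
  have := hSc.to_subtype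
  obtain ⟨G, -, φ, hφ, hG⟩ := (isCompact_univ_pi fun x : S => hK x).tendsto_subseq
    (x := fun n (x : S) => f n x) fun n x _ => hfK n x
  have hfφ : Equicontinuous (f ∘ φ) := hf.comp φ
  obtain ⟨F, -, hF⟩ := (isCompact_univ_pi hK).ultrafilter_le_nhds' ((hyperfilter ℕ).map (f ∘ φ))
    (Ultrafilter.mem_map.2 <| univ_mem' fun n => mem_univ_pi.2 (hfK (φ n)))
  have hFcont : Continuous F := Tendsto.continuous_of_equicontinuous hF hfφ
  have hFG : ∀ x : S, F x = G x := fun x =>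
    tendsto_nhds_unique (tendsto_pi_nhds.1 hF x)
      ((tendsto_pi_nhds.1 hG x).mono_left Nat.hyperfilter_le_atTop)
  have hdense : Dense {x | Tendsto (fun n => (f ∘ φ) n x) atTop (𝓝 (F x))} :=
    hSd.mono fun x hx => by
      simpa only [mem_ofPred_eq, hFG ⟨x, hx⟩] using! tendsto_pi_nhds.1 hG ⟨x, hx⟩
  have hall := (hfφ.isClosed_setOfPred_tendsto hFcont).closure_eq.symm.trans hdense.closure_eq
  exact ⟨F, φ, hφ, fun x => (Set.ext_iff.1 hall x).2 (mem_univ x)⟩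

variable {X E : Type*} [MeasurableSpace X] [NormedAddCommGroup E] {p : ℝ≥0∞}
  {μ : Measure X} [IsFiniteMeasure μ]

lemma tendsto_eLpNorm_sub_of_bounded (hp1 : 1 ≤ p) (hp : p ≠ ⊤) {f : ℕ → X → E} {F : X → E}
    {C : ℝ} (hf : ∀ n, AEStronglyMeasurable (f n) μ) (hC : ∀ n, ∀ᵐ x ∂μ, ‖f n x‖ ≤ C)
    (hF : ∀ᵐ x ∂μ, Tendsto (fun n => f n x) atTop (𝓝 (F x))) :
    MemLp F p μ ∧ Tendsto (fun n => eLpNorm (f n - F) p μ) atTop (𝓝 0) := by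
  have hFC : ∀ᵐ x ∂μ, ‖F x‖ ≤ C := by
    filter_upwards [hF, ae_all_iff.2 hC] with x hx hxC
    exact le_of_tendsto hx.norm (.of_forall hxC)
  have hFp : MemLp F p μ := MemLp.of_bound (aestronglyMeasurable_of_tendsto_ae atTop hf hF) C hFC
  refine ⟨hFp, tendsto_Lp_finite_of_tendsto_ae hp1 hp hf hFp ?_ hF⟩
  refine unifIntegrable_of hp1 hp hf fun ε _ => ⟨C.toNNReal + 1, fun n => ?_⟩
  have hzero : {x | C.toNNReal + 1 ≤ ‖f n x‖₊}.indicator (f n) =ᵐ[μ] 0 := by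
    filter_upwards [hC n] with x hx
    refine indicator_of_notMem (fun hle => ?_) _
    exact (lt_add_one C.toNNReal).not_ge <| hle.trans <|
      NNReal.le_toNNReal_of_coe_le ((coe_nnnorm _).trans_le hx)
  simp [eLpNorm_congr_ae hzero]

lemma exists_subseq_tendsto_Lp_of_equicontinuous [TopologicalSpace X]
    [TopologicalSpace.SeparableSpace X] [ProperSpace E] [Fact (1 ≤ p)] (hp : p ≠ ⊤)
    {v : ℕ → X → E} {C : ℝ} (hv : ∀ n, AEStronglyMeasurable (v n) μ) (hC : ∀ n x, ‖v n x‖ ≤ C)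
    (hequi : Equicontinuous v) {w : ℕ → Lp E p μ}
    (hw : Tendsto (fun n => eLpNorm (⇑(w n) - v n) p μ) atTop (𝓝 0)) :
    ∃ W, ∃ φ : ℕ → ℕ, StrictMono φ ∧ Tendsto (w ∘ φ) atTop (𝓝 W) := by
  obtain ⟨F, φ, hφ, hF⟩ := exists_subseq_tendsto_of_equicontinuous hequi
    (fun _ => isCompact_closedBall (0 : E) C) fun n x => mem_closedBall_zero_iff.2 (hC n x)
  obtain ⟨hFp, hvF⟩ := tendsto_eLpNorm_sub_of_bounded (μ := μ) (p := p) Fact.out hp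
    (fun n => hv (φ n)) (fun n => .of_forall (hC (φ n))) (.of_forall hF)
  refine ⟨hFp.toLp F, φ, hφ, (Lp.tendsto_Lp_iff_tendsto_eLpNorm _ _ hFp).2 ?_⟩
  have hsum := (hw.comp hφ.tendsto_atTop).add hvF
  rw [add_zero] at hsum
  refine tendsto_of_tendsto_of_tendsto_of_le_of_le tendsto_const_nhds hsum (fun _ => zero_le)
    fun n => ?_
  rw [Function.comp_apply, ← sub_add_sub_cancel _ (v (φ n)) F]
  exact eLpNorm_add_le ((Lp.aestronglyMeasurable _).sub (hv _)) ((hv _).sub hFp.1) Fact.out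

end Compactness

section ProbabilityMeasure

variable {X E : Type*} [MeasurableSpace X] [NormedAddCommGroup E] {p : ℝ≥0∞}
  {μ : Measure X} [IsProbabilityMeasure μ]

lemma integral_norm_le_lpNorm (hp : 1 ≤ p) {f : X → E} (hf : MemLp f p μ) :
    ∫ x, ‖f x‖ ∂μ ≤ lpNorm f p μ := by
  rw [← lpNorm_one_eq_integral_norm hf.1, ← toReal_eLpNorm hf.1, ← toReal_eLpNorm hf.1]
  exact ENNReal.toReal_mono hf.2.ne (eLpNorm_le_eLpNorm_of_exponent_le hp hf.1)

lemma lpNorm_le_of_bound {f : X → E} {C : ℝ} (hC0 : 0 ≤ C) (hC : ∀ᵐ x ∂μ, ‖f x‖ ≤ C) :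
    lpNorm f p μ ≤ C := by
  by_cases hf : AEStronglyMeasurable f μ
  · rw [← toReal_eLpNorm hf]
    refine ENNReal.toReal_le_of_le_ofReal hC0 ?_
    simpa using eLpNorm_le_of_ae_bound (p := p) hC
  · rwa [lpNorm_of_not_aestronglyMeasurable hf]

lemma lpNorm_le_mul_lpNorm_add [NormedSpace ℝ E] (hp : 1 ≤ p) {f₀ f₁ : X → E} {c C : ℝ}
    (h₀ : MemLp f₀ p μ) (hc : 0 ≤ c) (hC : 0 ≤ C) (h : ∀ᵐ x ∂μ, ‖f₁ x - c • f₀ x‖ ≤ C) :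
    lpNorm f₁ p μ ≤ c * lpNorm f₀ p μ + C :=
  calc lpNorm f₁ p μ ≤ lpNorm (c • f₀) p μ + lpNorm (f₁ - c • f₀) p μ :=
        lpNorm_le_lpNorm_add_lpNorm_sub' (h₀.const_smul c) hp
    _ ≤ c * lpNorm f₀ p μ + C := by
        rw [lpNorm_const_smul, coe_nnnorm, Real.norm_of_nonneg hc]
        gcongr
        exact lpNorm_le_of_bound hC h

end ProbabilityMeasure

section ExponentialKernel

lemma integral_exp_neg_sub (τ t : ℝ) :
    ∫ r in τ..t, Real.exp (-(t - r)) = 1 - Real.exp (-(t - τ)) := by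
  simp_rw [neg_sub]
  rw [intervalIntegral.integral_comp_sub_right, integral_exp, sub_self, Real.exp_zero]

lemma abs_integral_exp_neg_sub_mul_le {f : ℝ → ℝ} {τ t C : ℝ} (hτt : τ ≤ t) (hC : 0 ≤ C)
    (hf : ∀ r ∈ Ioc τ t, |f r| ≤ C) : |∫ r in τ..t, Real.exp (-(t - r)) * f r| ≤ C :=
  calc |∫ r in τ..t, Real.exp (-(t - r)) * f r| ≤ ∫ r in τ..t, Real.exp (-(t - r)) * C := by
        have hint : IntervalIntegrable (fun r => Real.exp (-(t - r)) * C) volume τ t :=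
          Continuous.intervalIntegrable (by fun_prop) _ _
        rw [← Real.norm_eq_abs]
        refine intervalIntegral.norm_integral_le_of_norm_le hτt (.of_forall fun r hr => ?_) hint
        rw [norm_mul, Real.norm_of_nonneg (Real.exp_pos _).le]
        exact mul_le_mul_of_nonneg_left (hf r hr) (Real.exp_pos _).le
    _ = (1 - Real.exp (-(t - τ))) * C := by
        rw [intervalIntegral.integral_mul_const, integral_exp_neg_sub]
    _ ≤ C := mul_le_of_le_one_left hC (sub_le_self _ (Real.exp_pos _).le)

lemma integral_exp_neg_sub_mul (f : ℝ → ℝ) (τ t : ℝ) :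
    ∫ r in τ..t, Real.exp (-(t - r)) * f r = Real.exp (-t) * ∫ r in τ..t, Real.exp r * f r := by
  rw [← intervalIntegral.integral_const_mul]
  refine intervalIntegral.integral_congr fun r _ => ?_
  rw [← mul_assoc, ← Real.exp_add, neg_sub, sub_eq_neg_add]

lemma tendsto_exp_neg_sub_atBot (t : ℝ) :
    Tendsto (fun τ => Real.exp (-(t - τ))) atBot (𝓝 0) := by
  simp_rw [neg_sub, sub_eq_add_neg]
  exact Real.tendsto_exp_atBot.comp (tendsto_atBot_add_const_right _ (-t) tendsto_id)

end ExponentialKernel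

section LeftContinuous

lemma tendsto_ceil_sub_one_div_nhdsLT (s : ℝ) :
    Tendsto (fun n : ℕ => ((⌈((n : ℝ) + 1) * s⌉ : ℝ) - 1) / ((n : ℝ) + 1)) atTop (𝓝[<] s) := by
  have hpos : ∀ n : ℕ, (0 : ℝ) < n + 1 := fun n => n.cast_add_one_pos
  have hlt : ∀ n : ℕ, ((⌈((n : ℝ) + 1) * s⌉ : ℝ) - 1) / ((n : ℝ) + 1) < s := fun n => by
    rw [div_lt_iff₀' (hpos n), sub_lt_iff_lt_add]
    exact Int.ceil_lt_add_one _
  have hge : ∀ n : ℕ, s - 1 / ((n : ℝ) + 1) ≤ ((⌈((n : ℝ) + 1) * s⌉ : ℝ) - 1) / ((n : ℝ) + 1) :=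
    fun n => by
      rw [sub_div, sub_le_sub_iff_right, le_div_iff₀' (hpos n)]
      exact Int.le_ceil _
  have hs : Tendsto (fun n : ℕ => s - 1 / ((n : ℝ) + 1)) atTop (𝓝 s) := by
    simpa only [sub_zero] using
      tendsto_const_nhds.sub (tendsto_one_div_add_atTop_nhds_zero_nat (𝕜 := ℝ))
  exact tendsto_nhdsWithin_iff.2
    ⟨tendsto_of_tendsto_of_tendsto_of_le_of_le hs tendsto_const_nhds hge fun n => (hlt n).le,
      .of_forall hlt⟩

lemma aemeasurable_of_continuousWithinAt_Iio {β : Type*} [TopologicalSpace β]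
    [TopologicalSpace.PseudoMetrizableSpace β] [MeasurableSpace β] [BorelSpace β] {f : ℝ → β}
    {τ : ℝ} (hf : ∀ s > τ, ContinuousWithinAt f (Iio s) s) (μ : Measure ℝ) :
    AEMeasurable f (μ.restrict (Ioi τ)) := by
  refine aemeasurable_of_tendsto_metrizable_ae'
    (f := fun (n : ℕ) s => f (((⌈((n : ℝ) + 1) * s⌉ : ℝ) - 1) / ((n : ℝ) + 1))) (fun n => ?_) ?_
  · have hstep : Measurable fun m : ℤ => f (((m : ℝ) - 1) / ((n : ℝ) + 1)) := measurable_from_top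
    exact (hstep.comp (Int.measurable_ceil.comp (measurable_const_mul _))).aemeasurable
  · filter_upwards [ae_restrict_mem measurableSet_Ioi] with s hs
    exact (hf s hs).tendsto.comp (tendsto_ceil_sub_one_div_nhdsLT s)

variable {E : Type*} [NormedAddCommGroup E] {G : ℝ → E} {τ s C : ℝ}

lemma intervalIntegrable_of_frequently_nhdsLT (hτs : τ < s) (hG : ∀ r ∈ Ioo τ s, ‖G r‖ ≤ C)
    (hi : ∃ᶠ r in 𝓝[<] s, IntervalIntegrable G volume τ r) : IntervalIntegrable G volume τ s := by
  rw [intervalIntegrable_iff_integrableOn_Ioo_of_le hτs.le]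
  obtain ⟨v, -, hv, hvs⟩ := exists_seq_strictMono_tendsto' hτs
  have hmeas : ∀ n, AEStronglyMeasurable G (volume.restrict (Ioc τ (v n))) := fun n => by
    obtain ⟨r, hr, hvr⟩ := (hi.and_eventually
      (eventually_nhdsWithin_of_eventually_nhds (lt_mem_nhds (hv n).2))).exists
    exact hr.1.1.mono_measure (Measure.restrict_mono (Ioc_subset_Ioc_right hvr.le) le_rfl)
  have hunion : Ioo τ s ⊆ ⋃ n, Ioc τ (v n) := fun q hq => by
    obtain ⟨n, hn⟩ := (hvs.eventually (lt_mem_nhds hq.2)).exists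
    exact mem_iUnion.2 ⟨n, hq.1, hn.le⟩
  have hG_meas : AEStronglyMeasurable G (volume.restrict (Ioo τ s)) :=
    (aestronglyMeasurable_iUnion_iff.2 hmeas).mono_measure (Measure.restrict_mono hunion le_rfl)
  refine Integrable.mono' (integrableOn_const (C := C) (by simp)) hG_meas ?_
  filter_upwards [ae_restrict_mem measurableSet_Ioo] with r hr using hG r hr

-- `G` need not be measurable: if it is not integrable up to `s`, then it is not integrable up to
-- any `r < s` close to `s` either, and both integrals take the junk value `0`.
lemma continuousWithinAt_Iio_intervalIntegral [NormedSpace ℝ E] (hτs : τ < s)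
    (hG : ∀ r ∈ Ioo τ s, ‖G r‖ ≤ C) :
    ContinuousWithinAt (fun r => ∫ q in τ..r, G q) (Iio s) s := by
  by_cases hi : IntervalIntegrable G volume τ s
  · have hcont := intervalIntegral.continuousOn_primitive_interval' hi left_mem_uIcc s
      right_mem_uIcc
    rw [uIcc_of_le hτs.le] at hcont
    exact hcont.mono_of_mem_nhdsWithin <|
      mem_of_superset (Ioo_mem_nhdsLT hτs) Ioo_subset_Icc_self
  · have hnot : ∀ᶠ r in 𝓝[<] s, ¬IntervalIntegrable G volume τ r :=
      not_frequently.1 <| mt (intervalIntegrable_of_frequently_nhdsLT hτs hG) hi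
    rw [ContinuousWithinAt, intervalIntegral.integral_undef hi]
    refine tendsto_const_nhds.congr' ?_
    filter_upwards [hnot] with r hr using (intervalIntegral.integral_undef hr).symm

end LeftContinuous

section Convolution

variable {N : ℕ} {J : Euc N → ℝ}

/-- `μ` dominates Lebesgue measure on every compact set up to a constant, so that functions
integrable with respect to `μ` are locally integrable, with quantitative control. -/
def DominatesVolumeOnCompacts (μ : Measure (Euc N)) : Prop :=
  ∀ K : Set (Euc N), IsCompact K → ∃ c : ℝ≥0, volume.restrict K ≤ c • μ

lemma DominatesVolumeOnCompacts.locallyIntegrable {μ : Measure (Euc N)}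
    (hμ : DominatesVolumeOnCompacts μ) {u : Euc N → ℝ} (hu : Integrable u μ) :
    LocallyIntegrable u :=
  locallyIntegrable_iff.2 fun K hK => by
    obtain ⟨c, hc⟩ := hμ K hK
    exact (hu.smul_measure_nnreal (c := c)).mono_measure hc

lemma DominatesVolumeOnCompacts.exists_setIntegral_norm_le {μ : Measure (Euc N)}
    (hμ : DominatesVolumeOnCompacts μ) {K : Set (Euc N)} (hK : IsCompact K) :
    ∃ c : ℝ≥0, ∀ u : Euc N → ℝ, Integrable u μ → ∫ x in K, ‖u x‖ ≤ c * ∫ x, ‖u x‖ ∂μ := by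
  obtain ⟨c, hc⟩ := hμ K hK
  refine ⟨c, fun u hu => ?_⟩
  calc ∫ x in K, ‖u x‖ ≤ ∫ x, ‖u x‖ ∂(c • μ) :=
        integral_mono_measure hc (.of_forall fun _ => norm_nonneg _) hu.norm.smul_measure_nnreal
    _ = c * ∫ x, ‖u x‖ ∂μ := by rw [integral_smul_nnreal_measure, NNReal.smul_def, smul_eq_mul]

lemma integrable_sub_mul_of_hasCompactSupport (hJ : Continuous J) (hJs : HasCompactSupport J)
    {u : Euc N → ℝ} (hu : LocallyIntegrable u) (x : Euc N) :
    Integrable fun y => J (x - y) * u y := by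
  have hconv := hJs.convolutionExists_right (.mul ℝ ℝ) hu hJ x
  simpa only [ConvolutionExistsAt, ContinuousLinearMap.mul_apply', mul_comm] using hconv

lemma conv_const (J : Euc N → ℝ) (c : ℝ) (x : Euc N) : conv J (fun _ => c) x = (∫ y, J y) * c := by
  rw [conv, integral_mul_const, integral_sub_left_eq_self J volume x]

lemma abs_conv_sub_conv_le (hJ : Continuous J) (hJs : HasCompactSupport J) {u : Euc N → ℝ}
    (hu : LocallyIntegrable u) {K : Set (Euc N)} (hK : IsCompact K) {x x' : Euc N} {η : ℝ}
    (hx : ∀ y ∉ K, J (x - y) = 0) (hx' : ∀ y ∉ K, J (x' - y) = 0)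
    (hη : ∀ y, |J (x - y) - J (x' - y)| ≤ η) :
    |conv J u x - conv J u x'| ≤ η * ∫ y in K, ‖u y‖ := by
  have heq : conv J u x - conv J u x' = ∫ y in K, (J (x - y) - J (x' - y)) * u y := by
    rw [conv, conv, ← integral_sub (integrable_sub_mul_of_hasCompactSupport hJ hJs hu x)
      (integrable_sub_mul_of_hasCompactSupport hJ hJs hu x')]
    simp_rw [← sub_mul]
    refine (setIntegral_eq_integral_of_forall_compl_eq_zero fun y hy => ?_).symm
    rw [hx y hy, hx' y hy, sub_zero, zero_mul]
  rw [heq, ← integral_const_mul, ← Real.norm_eq_abs]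
  refine norm_integral_le_of_norm_le
    ((hu.integrableOn_isCompact hK).norm.const_mul η) (.of_forall fun y => ?_)
  rw [norm_mul]
  exact mul_le_mul_of_nonneg_right (hη y) (norm_nonneg _)

lemma equicontinuous_conv (hJ : Continuous J) (hJs : HasCompactSupport J) {μ : Measure (Euc N)}
    (hμ : DominatesVolumeOnCompacts μ) {ι : Type*} {U : ι → Euc N → ℝ} {M : ℝ}
    (hU : ∀ i, Integrable (U i) μ) (hM : ∀ i, ∫ x, ‖U i x‖ ∂μ ≤ M) :
    Equicontinuous fun i => conv J (U i) := by
  intro x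
  let K : Set (Euc N) := (fun z : Euc N × Euc N => z.1 - z.2) '' Metric.closedBall x 1 ×ˢ tsupport J
  have hK : IsCompact K := ((isCompact_closedBall x 1).prod hJs).image continuous_sub
  have hKJ : ∀ x' ∈ Metric.closedBall x 1, ∀ y ∉ K, J (x' - y) = 0 := fun x' hx' y hy => by
    refine image_eq_zero_of_notMem_tsupport fun hmem => hy ⟨(x', x' - y), ⟨hx', hmem⟩, ?_⟩
    exact sub_sub_cancel x' y
  obtain ⟨c, hc⟩ := hμ.exists_setIntegral_norm_le hK
  refine Metric.equicontinuousAt_iff_right.2 fun ε hε => ?_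
  have hden : 0 < (c : ℝ) * |M| + 1 := by positivity
  obtain ⟨δ, hδ, hJδ⟩ := Metric.uniformContinuous_iff.1 (hJs.uniformContinuous_of_continuous hJ)
    (ε / (c * |M| + 1)) (by positivity)
  filter_upwards [Metric.ball_mem_nhds x hδ, Metric.closedBall_mem_nhds x one_pos] with x' hδ' hx' i
  have hη : ∀ y, |J (x - y) - J (x' - y)| ≤ ε / (c * |M| + 1) := fun y =>
    (hJδ (by rwa [dist_sub_right, dist_comm])).le
  calc dist (conv J (U i) x) (conv J (U i) x')
      ≤ ε / (c * |M| + 1) * ∫ y in K, ‖U i y‖ :=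
        abs_conv_sub_conv_le hJ hJs (hμ.locallyIntegrable (hU i)) hK
          (hKJ x (Metric.mem_closedBall_self zero_le_one)) (hKJ x' hx') hη
    _ ≤ ε / (c * |M| + 1) * (c * |M|) := by
        gcongr
        exact (hc _ (hU i)).trans (by gcongr; exact (hM i).trans (le_abs_self M))
    _ < ε := by
        rw [div_mul_eq_mul_div, div_lt_iff₀ hden]
        exact mul_lt_mul_of_pos_left (lt_add_one _) hε

end Convolution

section WeightedMeasure

variable {N : ℕ} {ρ : Euc N → ℝ}

lemma isProbabilityMeasure_wMeasure (hρ : ∀ x, 0 ≤ ρ x) (hρ1 : ∫ x, ρ x = 1) :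
    IsProbabilityMeasure (wMeasure ρ) where
  measure_univ := by
    have hint : Integrable ρ := .of_integral_ne_zero (hρ1 ▸ one_ne_zero)
    rw [wMeasure, withDensity_apply _ MeasurableSet.univ, Measure.restrict_univ,
      ← ofReal_integral_eq_lintegral_ofReal hint (.of_forall hρ), hρ1, ENNReal.ofReal_one]

lemma integrable_wMeasure_iff (hρm : Measurable ρ) (hρ : ∀ x, 0 ≤ ρ x) {f : Euc N → ℝ} :
    Integrable f (wMeasure ρ) ↔ Integrable fun x => ρ x * f x := by
  rw [wMeasure, integrable_withDensity_iff_integrable_smul' (by fun_prop)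
    (.of_forall fun x => ENNReal.ofReal_lt_top)]
  simp_rw [ENNReal.toReal_ofReal (hρ _), smul_eq_mul]

lemma integral_wMeasure (hρm : Measurable ρ) (hρ : ∀ x, 0 ≤ ρ x) (f : Euc N → ℝ) :
    ∫ x, f x ∂wMeasure ρ = ∫ x, ρ x * f x := by
  rw [wMeasure, integral_withDensity_eq_integral_toReal_smul (by fun_prop)
    (.of_forall fun x => ENNReal.ofReal_lt_top)]
  simp_rw [ENNReal.toReal_ofReal (hρ _), smul_eq_mul]

lemma volume_absolutelyContinuous_wMeasure (hρm : Measurable ρ) (hρ : ∀ x, 0 < ρ x) :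
    volume ≪ wMeasure ρ :=
  withDensity_absolutelyContinuous' (by fun_prop)
    (.of_forall fun x => (ENNReal.ofReal_pos.2 (hρ x)).ne')

lemma memWLp_iff_memLp (hρm : Measurable ρ) (hρ : ∀ x, 0 < ρ x) {p : ℝ≥0∞} (hp0 : p ≠ 0)
    (hp : p ≠ ⊤) {u : Euc N → ℝ} : MemWLp p.toReal ρ u ↔ MemLp u p (wMeasure ρ) := by
  have hrpow : Integrable (fun x => ρ x * |u x| ^ p.toReal) ↔
      Integrable (fun x => ‖u x‖ ^ p.toReal) (wMeasure ρ) :=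
    (integrable_wMeasure_iff hρm fun x => (hρ x).le).symm
  have hmeas : AEStronglyMeasurable u volume ↔ AEStronglyMeasurable u (wMeasure ρ) :=
    ⟨fun h => h.mono_ac (withDensity_absolutelyContinuous _ _),
      fun h => h.mono_ac (volume_absolutelyContinuous_wMeasure hρm hρ)⟩
  rw [MemWLp, hrpow, hmeas]
  exact ⟨fun h => (integrable_norm_rpow_iff h.1 hp0 hp).1 h.2,
    fun h => ⟨h.1, (integrable_norm_rpow_iff h.1 hp0 hp).2 h⟩⟩

lemma wnorm_eq_lpNorm (hρm : Measurable ρ) (hρ : ∀ x, 0 ≤ ρ x) {p : ℝ≥0∞} (hp0 : p ≠ 0)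
    (hp : p ≠ ⊤) {u : Euc N → ℝ} (hu : AEStronglyMeasurable u (wMeasure ρ)) :
    wnorm p.toReal ρ u = lpNorm u p (wMeasure ρ) := by
  rw [lpNorm_eq_integral_norm_rpow_toReal hp0 hp hu, integral_wMeasure hρm hρ, wnorm, one_div]
  rfl

lemma dominatesVolumeOnCompacts_wMeasure (hρc : Continuous ρ) (hρ : ∀ x, 0 < ρ x) :
    DominatesVolumeOnCompacts (wMeasure ρ) := by
  intro K hK
  obtain ⟨C, hC⟩ := hK.exists_bound_of_continuousOn (hρc.inv₀ fun x => (hρ x).ne').continuousOn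
  have hbound : ∀ x ∈ K, (ENNReal.ofReal (ρ x))⁻¹ ≤ C.toNNReal := fun x hx => by
    rw [← ENNReal.ofReal_inv_of_pos (hρ x)]
    exact ENNReal.ofReal_le_ofReal ((le_abs_self _).trans (hC x hx))
  refine ⟨C.toNNReal, ?_⟩
  calc volume.restrict K
      = ((wMeasure ρ).restrict K).withDensity fun x => (ENNReal.ofReal (ρ x))⁻¹ := by
        rw [← restrict_withDensity hK.measurableSet]
        exact congrArg (Measure.restrict · K) (withDensity_inv_same (by fun_prop)
          (.of_forall fun x => (ENNReal.ofReal_pos.2 (hρ x)).ne')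
          (.of_forall fun x => ENNReal.ofReal_ne_top)).symm
    _ ≤ ((wMeasure ρ).restrict K).withDensity fun _ => (C.toNNReal : ℝ≥0∞) :=
        withDensity_mono ((ae_restrict_iff' hK.measurableSet).2 (.of_forall hbound))
    _ = C.toNNReal • (wMeasure ρ).restrict K := by rw [withDensity_const]; rfl
    _ ≤ C.toNNReal • wMeasure ρ := by gcongr; exact Measure.restrict_le_self

end WeightedMeasure

section Solutions

variable {N : ℕ} {J : Euc N → ℝ} {g : ℝ → ℝ} {β τ a : ℝ} {uτ : Euc N → ℝ} {u : ℝ → Euc N → ℝ}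

/-- The nonlinear term `g(β (J * u) + β h)` of the evolution equation along `u`, as a function of
space and time. -/
def forcing (J : Euc N → ℝ) (g : ℝ → ℝ) (h : ℝ → ℝ → ℝ) (β : ℝ) (u : ℝ → Euc N → ℝ) (x : Euc N)
    (s : ℝ) : ℝ :=
  g (β * conv J (u s) x + β * h s (u s x))

namespace IsSolution

variable {h : ℝ → ℝ → ℝ}

lemma eq_exp_mul_add_integral (hu : IsSolution J g h β τ uτ u) {t : ℝ} (ht : τ ≤ t) (x : Euc N) :
    u t x = Real.exp (-(t - τ)) * uτ x +
      ∫ s in τ..t, Real.exp (-(t - s)) * forcing J g h β u x s :=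
  hu t ht x

lemma initial_eq (hu : IsSolution J g h β τ uτ u) : u τ = uτ := by
  ext x
  rw [hu τ le_rfl x, intervalIntegral.integral_same, sub_self, neg_zero, Real.exp_zero, one_mul,
    add_zero]

lemma abs_sub_exp_mul_le (hu : IsSolution J g h β τ uτ u) (hga : ∀ s, |g s| ≤ a) {t : ℝ}
    (ht : τ ≤ t) (x : Euc N) : |u t x - Real.exp (-(t - τ)) * uτ x| ≤ a := by
  rw [hu t ht x, add_sub_cancel_left]
  exact abs_integral_exp_neg_sub_mul_le ht ((abs_nonneg _).trans (hga 0)) fun _ _ => hga _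

lemma abs_le (hu : IsSolution J g h β τ uτ u) (hga : ∀ s, |g s| ≤ a) {t : ℝ} (ht : τ ≤ t)
    (x : Euc N) : |u t x| ≤ |uτ x| + a :=
  calc |u t x| = |Real.exp (-(t - τ)) * uτ x + (u t x - Real.exp (-(t - τ)) * uτ x)| := by
        rw [add_sub_cancel]
    _ ≤ |Real.exp (-(t - τ)) * uτ x| + |u t x - Real.exp (-(t - τ)) * uτ x| := abs_add_le _ _
    _ ≤ |uτ x| + a := by
        refine add_le_add ?_ (hu.abs_sub_exp_mul_le hga ht x)
        rw [abs_mul, Real.abs_exp]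
        exact mul_le_of_le_one_left (abs_nonneg _) (Real.exp_le_one_iff.2 (by linarith))

lemma continuousWithinAt_Iio (hu : IsSolution J g h β τ uτ u) (hga : ∀ s, |g s| ≤ a) {s : ℝ}
    (hs : τ < s) (x : Euc N) : ContinuousWithinAt (fun r => u r x) (Iio s) s := by
  have hduhamel : ∀ r ≥ τ, u r x = Real.exp (-(r - τ)) * uτ x +
      Real.exp (-r) * ∫ q in τ..r, Real.exp q * forcing J g h β u x q := fun r hr => by
    rw [hu.eq_exp_mul_add_integral hr, integral_exp_neg_sub_mul]
  have hprimitive : ContinuousWithinAt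
      (fun r => ∫ q in τ..r, Real.exp q * forcing J g h β u x q) (Iio s) s := by
    refine continuousWithinAt_Iio_intervalIntegral hs (C := Real.exp s * a) fun r hr => ?_
    rw [norm_mul, Real.norm_of_nonneg (Real.exp_pos r).le]
    exact mul_le_mul (Real.exp_le_exp.2 hr.2.le) (hga _) (norm_nonneg _) (Real.exp_pos s).le
  have hrhs : ContinuousWithinAt (fun r => Real.exp (-(r - τ)) * uτ x +
      Real.exp (-r) * ∫ q in τ..r, Real.exp q * forcing J g h β u x q) (Iio s) s :=
    .add (Continuous.continuousWithinAt (by fun_prop))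
      (.mul (Continuous.continuousWithinAt (by fun_prop)) hprimitive)
  refine hrhs.congr_of_eventuallyEq ?_ (hduhamel s hs.le)
  filter_upwards [Ioo_mem_nhdsLT hs] with r hr using hduhamel r hr.1.le

lemma continuousWithinAt_conv (hu : IsSolution J g h β τ uτ u) (hJ : Continuous J)
    (hJs : HasCompactSupport J) (hga : ∀ s, |g s| ≤ a)
    (hloc : ∀ r ≥ τ, LocallyIntegrable (u r)) {s : ℝ} (hs : τ < s) (x : Euc N) :
    ContinuousWithinAt (fun r => conv J (u r) x) (Iio s) s := by
  have huτ : LocallyIntegrable uτ := hu.initial_eq ▸ hloc τ le_rfl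
  have hdom : LocallyIntegrable fun y => |uτ y| + a :=
    LocallyIntegrable.add (fun y => (huτ y).norm) (locallyIntegrable_const a)
  have hτ : ∀ᶠ r in 𝓝[<] s, τ ≤ r := by
    filter_upwards [Ioo_mem_nhdsLT hs] with r hr using hr.1.le
  refine tendsto_integral_filter_of_dominated_convergence
    (fun y => ‖J (x - y) * (|uτ y| + a)‖) ?_ ?_
    (integrable_sub_mul_of_hasCompactSupport hJ hJs hdom x).norm
    (.of_forall fun y => (hu.continuousWithinAt_Iio hga hs y).const_mul _)
  · filter_upwards [hτ] with r hr
    exact (integrable_sub_mul_of_hasCompactSupport hJ hJs (hloc r hr) x).1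
  · filter_upwards [hτ] with r hr
    refine .of_forall fun y => ?_
    rw [norm_mul, norm_mul]
    exact mul_le_mul_of_nonneg_left ((hu.abs_le hga hr y).trans (le_abs_self _)) (norm_nonneg _)

lemma continuousWithinAt_forcing (hu : IsSolution J g h β τ uτ u) (hJ : Continuous J)
    (hJs : HasCompactSupport J) (hg : Continuous g) (hga : ∀ s, |g s| ≤ a)
    (hh : Continuous (Function.uncurry h)) (hloc : ∀ r ≥ τ, LocallyIntegrable (u r)) {s : ℝ}
    (hs : τ < s) (x : Euc N) : ContinuousWithinAt (forcing J g h β u x) (Iio s) s := by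
  have hconv := hu.continuousWithinAt_conv hJ hJs hga hloc hs x
  have hu_left := hu.continuousWithinAt_Iio hga hs x
  exact (hg.tendsto _).comp ((hconv.const_mul β).add
    (((hh.tendsto (s, u s x)).comp (continuousWithinAt_id.prodMk hu_left)).const_mul β))

lemma intervalIntegrable (hu : IsSolution J g h β τ uτ u) (hJ : Continuous J)
    (hJs : HasCompactSupport J) (hg : Continuous g) (hga : ∀ s, |g s| ≤ a)
    (hh : Continuous (Function.uncurry h)) (hloc : ∀ r ≥ τ, LocallyIntegrable (u r)) (t : ℝ)
    {s₁ s₂ : ℝ} (h₁ : τ ≤ s₁) (h₂ : τ ≤ s₂) (x : Euc N) :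
    IntervalIntegrable (fun s => Real.exp (-(t - s)) * forcing J g h β u x s) volume s₁ s₂ := by
  have hmeas : AEMeasurable (forcing J g h β u x) (volume.restrict (Ioi τ)) :=
    aemeasurable_of_continuousWithinAt_Iio
      (fun s hs => hu.continuousWithinAt_forcing hJ hJs hg hga hh hloc hs x) _
  have hsub : uIoc s₁ s₂ ⊆ Ioi τ := fun r hr => (le_min h₁ h₂).trans_lt hr.1
  have hbound : IntervalIntegrable (fun s => Real.exp (-(t - s)) * a) volume s₁ s₂ :=
    Continuous.intervalIntegrable (by fun_prop) _ _
  refine hbound.mono_fun' ?_ (.of_forall fun r => ?_)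
  · exact (Continuous.aestronglyMeasurable (by fun_prop)).mul
      (hmeas.mono_measure (Measure.restrict_mono hsub le_rfl)).aestronglyMeasurable
  · beta_reduce
    rw [norm_mul, Real.norm_of_nonneg (Real.exp_pos _).le]
    exact mul_le_mul_of_nonneg_left (hga _) (Real.exp_pos _).le

lemma restart (hu : IsSolution J g h β τ uτ u) (hJ : Continuous J) (hJs : HasCompactSupport J)
    (hg : Continuous g) (hga : ∀ s, |g s| ≤ a) (hh : Continuous (Function.uncurry h))
    (hloc : ∀ r ≥ τ, LocallyIntegrable (u r)) {s : ℝ} (hs : τ ≤ s) :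
    IsSolution J g h β s (u s) u := by
  intro t hst x
  have hexp : ∀ r, Real.exp (-(t - s)) * Real.exp (-(s - r)) = Real.exp (-(t - r)) := fun r => by
    rw [← Real.exp_add]
    ring_nf
  have hint {s₁ s₂ : ℝ} (h₁ : τ ≤ s₁) (h₂ : τ ≤ s₂) :=
    hu.intervalIntegrable hJ hJs hg hga hh hloc t h₁ h₂ x
  calc u t x = Real.exp (-(t - τ)) * uτ x +
        ∫ r in τ..t, Real.exp (-(t - r)) * forcing J g h β u x r :=
      hu.eq_exp_mul_add_integral (hs.trans hst) x
    _ = Real.exp (-(t - τ)) * uτ x + ((∫ r in τ..s, Real.exp (-(t - r)) * forcing J g h β u x r) +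
        ∫ r in s..t, Real.exp (-(t - r)) * forcing J g h β u x r) := by
      rw [intervalIntegral.integral_add_adjacent_intervals (hint le_rfl hs)
        (hint hs (hs.trans hst))]
    _ = Real.exp (-(t - s)) * (Real.exp (-(s - τ)) * uτ x +
        ∫ r in τ..s, Real.exp (-(s - r)) * forcing J g h β u x r) +
        ∫ r in s..t, Real.exp (-(t - r)) * forcing J g h β u x r := by
      rw [mul_add, ← intervalIntegral.integral_const_mul, add_assoc]
      simp_rw [← mul_assoc, hexp]
    _ = Real.exp (-(t - s)) * u s x + ∫ r in s..t, Real.exp (-(t - r)) * forcing J g h β u x r := by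
      rw [← hu.eq_exp_mul_add_integral hs x]

end IsSolution

/-- A solution of the evolution equation that starts at time `τ` and stays in `L^p(μ)`. -/
structure IsTrajectory (p : ℝ≥0∞) (μ : Measure (Euc N)) (J : Euc N → ℝ) (g : ℝ → ℝ)
    (h : ℝ → ℝ → ℝ) (β τ : ℝ) (u : ℝ → Euc N → ℝ) : Prop where
  isSolution : IsSolution J g h β τ (u τ) u
  memLp : ∀ t ≥ τ, MemLp (u t) p μ

namespace IsTrajectory

variable {p : ℝ≥0∞} {μ : Measure (Euc N)}

lemma restart {h : ℝ → ℝ → ℝ} (hu : IsTrajectory p μ J g h β τ u) (hp : 1 ≤ p)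
    [IsFiniteMeasure μ] (hμ : DominatesVolumeOnCompacts μ) (hJ : Continuous J)
    (hJs : HasCompactSupport J) (hg : Continuous g) (hga : ∀ s, |g s| ≤ a)
    (hh : Continuous (Function.uncurry h)) {s : ℝ} (hs : τ ≤ s) :
    IsTrajectory p μ J g h β s u where
  isSolution := hu.isSolution.restart hJ hJs hg hga hh
    (fun r hr => hμ.locallyIntegrable ((hu.memLp r hr).integrable hp)) hs
  memLp t ht := hu.memLp t (hs.trans ht)

variable [IsProbabilityMeasure μ]

lemma lpNorm_le {h : ℝ → ℝ → ℝ} (hu : IsTrajectory p μ J g h β τ u) (hp : 1 ≤ p)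
    (hga : ∀ s, |g s| ≤ a) {t : ℝ} (ht : τ ≤ t) :
    lpNorm (u t) p μ ≤ Real.exp (-(t - τ)) * lpNorm (u τ) p μ + a :=
  lpNorm_le_mul_lpNorm_add hp (hu.memLp τ le_rfl) (Real.exp_pos _).le
    ((abs_nonneg _).trans (hga 0)) (.of_forall fun x => hu.isSolution.abs_sub_exp_mul_le hga ht x)

lemma integral_norm_le {h : ℝ → ℝ → ℝ} (hu : IsTrajectory p μ J g h β τ u) (hp : 1 ≤ p)
    (hga : ∀ s, |g s| ≤ a) {t : ℝ} (ht : τ ≤ t) : ∫ x, ‖u t x‖ ∂μ ≤ lpNorm (u τ) p μ + a :=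
  calc ∫ x, ‖u t x‖ ∂μ ≤ lpNorm (u t) p μ := integral_norm_le_lpNorm hp (hu.memLp t ht)
    _ ≤ Real.exp (-(t - τ)) * lpNorm (u τ) p μ + a := hu.lpNorm_le hp hga ht
    _ ≤ lpNorm (u τ) p μ + a := by
        gcongr
        exact mul_le_of_le_one_left lpNorm_nonneg (Real.exp_le_one_iff.2 (by linarith))

variable {ι : Type*} {τ : ι → ℝ} {u : ι → ℝ → Euc N → ℝ} {h : ℝ → ℝ} {M t : ℝ}

lemma equicontinuous_conv (hu : ∀ i, IsTrajectory p μ J g (fun s _ => h s) β (τ i) (u i))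
    (hp : 1 ≤ p) (hμ : DominatesVolumeOnCompacts μ) (hJ : Continuous J)
    (hJs : HasCompactSupport J) (hga : ∀ s, |g s| ≤ a) (hM : ∀ i, lpNorm (u i (τ i)) p μ ≤ M) :
    Equicontinuous fun q : {q : ι × ℝ // τ q.1 ≤ q.2} => conv J (u q.1.1 q.1.2) :=
  _root_.equicontinuous_conv hJ hJs hμ (M := M + a)
    (fun q => ((hu q.1.1).memLp _ q.2).integrable hp)
    fun q => ((hu q.1.1).integral_norm_le hp hga q.2).trans (add_le_add_left (hM _) a)

lemma equicontinuous_sub (hu : ∀ i, IsTrajectory p μ J g (fun s _ => h s) β (τ i) (u i))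
    (hp : 1 ≤ p) (hμ : DominatesVolumeOnCompacts μ) (hJ : Continuous J)
    (hJs : HasCompactSupport J) (hg : UniformContinuous g) (hga : ∀ s, |g s| ≤ a)
    (hh : Continuous h) (hM : ∀ i, lpNorm (u i (τ i)) p μ ≤ M) (hτ : ∀ i, τ i ≤ t) :
    Equicontinuous fun i x => u i t x - Real.exp (-(t - τ i)) * u i (τ i) x := by
  refine fun x => Metric.equicontinuousAt_iff_right.2 fun ε hε => ?_
  obtain ⟨δ, hδ, hgδ⟩ := Metric.uniformContinuous_iff.1 hg (ε / 2) (half_pos hε)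
  filter_upwards [Metric.equicontinuousAt_iff_right.1
    (equicontinuous_conv hu hp hμ hJ hJs hga hM x) (δ / (|β| + 1)) (by positivity)] with x' hx' i
  have hforcing : ∀ s ∈ Ioc (τ i) t, |forcing J g (fun s _ => h s) β (u i) x s -
      forcing J g (fun s _ => h s) β (u i) x' s| ≤ ε / 2 := fun s hs => by
    refine (hgδ ?_).le
    rw [dist_add_right, Real.dist_eq, ← mul_sub, abs_mul]
    have hconv := (lt_div_iff₀ (by positivity)).1 (hx' ⟨(i, s), hs.1.le⟩)
    rw [Real.dist_eq] at hconv
    nlinarith [abs_nonneg (conv J (u i s) x - conv J (u i s) x')]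
  have hint (y : Euc N) := (hu i).isSolution.intervalIntegrable hJ hJs hg.continuous hga
    (by fun_prop) (fun r hr => hμ.locallyIntegrable (((hu i).memLp r hr).integrable hp)) t le_rfl
    (hτ i) y
  rw [(hu i).isSolution.eq_exp_mul_add_integral (hτ i) x,
    (hu i).isSolution.eq_exp_mul_add_integral (hτ i) x', add_sub_cancel_left, add_sub_cancel_left,
    Real.dist_eq, ← intervalIntegral.integral_sub (hint x) (hint x')]
  simp_rw [← mul_sub]
  exact (abs_integral_exp_neg_sub_mul_le (hτ i) (half_pos hε).le hforcing).trans_lt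
    (half_lt_self hε)

end IsTrajectory

end Solutions

section GlobalExistence

variable {E : Type*} [NormedAddCommGroup E] [NormedSpace ℝ E] {f : ℝ → E → E} {K : ℝ≥0}

lemma eqOn_Icc_of_hasDerivWithinAt_Icc (hlip : ∀ t, LipschitzWith K (f t)) {τ T T' : ℝ}
    (hT : T ≤ T') {y z : ℝ → E}
    (hy : ∀ t ∈ Icc τ T, HasDerivWithinAt y (f t (y t)) (Icc τ T) t)
    (hz : ∀ t ∈ Icc τ T', HasDerivWithinAt z (f t (z t)) (Icc τ T') t) (hyz : y τ = z τ) :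
    EqOn y z (Icc τ T) := by
  have hz' : ∀ t ∈ Icc τ T, HasDerivWithinAt z (f t (z t)) (Icc τ T) t := fun t ht =>
    (hz t (Icc_subset_Icc_right hT ht)).mono (Icc_subset_Icc_right hT)
  have hIci {x : ℝ → E} (hx : ∀ t ∈ Icc τ T, HasDerivWithinAt x (f t (x t)) (Icc τ T) t) :
      ∀ t ∈ Ico τ T, HasDerivWithinAt x (f t (x t)) (Ici t) t := fun t ht =>
    (hx t (Ico_subset_Icc_self ht)).mono_of_mem_nhdsWithin (Icc_mem_nhdsGE_of_mem ht)
  exact ODE_solution_unique_of_mem_Icc_right (v := f) (s := fun _ => univ)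
    (fun t _ => (hlip t).lipschitzOnWith) (fun t ht => (hy t ht).continuousWithinAt) (hIci hy)
    (fun _ _ => mem_univ _) (fun t ht => (hz' t ht).continuousWithinAt) (hIci hz')
    (fun _ _ => mem_univ _) hyz

variable [CompleteSpace E]

lemma exists_hasDerivWithinAt_Icc (hf : Continuous (Function.uncurry f))
    (hlip : ∀ t, LipschitzWith K (f t)) {τ T C : ℝ} (hτT : τ ≤ T)
    (hC : ∀ t ∈ Icc τ T, ∀ z, ‖f t z‖ ≤ C) (z₀ : E) :
    ∃ z : ℝ → E, z τ = z₀ ∧ ∀ t ∈ Icc τ T, HasDerivWithinAt z (f t (z t)) (Icc τ T) t := by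
  have hpl : IsPicardLindelof f (tmin := τ) (tmax := T) ⟨τ, left_mem_Icc.2 hτT⟩ z₀
      (C.toNNReal * (T - τ).toNNReal) 0 C.toNNReal K := by
    refine ⟨fun t _ => (hlip t).lipschitzOnWith, fun z _ => ?_, fun t ht z _ => ?_, ?_⟩
    · exact (hf.comp (.prodMk_left z)).continuousOn
    · exact (hC t ht z).trans C.le_coe_toNNReal
    · simp [hτT]
  exact hpl.exists_eq_forall_mem_Icc_hasDerivWithinAt₀

lemma exists_hasDerivWithinAt_Ici (hf : Continuous (Function.uncurry f))
    (hlip : ∀ t, LipschitzWith K (f t)) {τ : ℝ}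
    (hbdd : ∀ T, ∃ C, ∀ t ∈ Icc τ T, ∀ z, ‖f t z‖ ≤ C) (z₀ : E) :
    ∃ z : ℝ → E, z τ = z₀ ∧ ∀ t ≥ τ, HasDerivWithinAt z (f t (z t)) (Ici τ) t := by
  have hloc : ∀ n : ℕ, ∃ z : ℝ → E, z τ = z₀ ∧
      ∀ t ∈ Icc τ (τ + n), HasDerivWithinAt z (f t (z t)) (Icc τ (τ + n)) t := fun n => by
    obtain ⟨C, hC⟩ := hbdd (τ + n)
    exact exists_hasDerivWithinAt_Icc hf hlip (le_add_of_nonneg_right n.cast_nonneg) hC z₀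
  choose z hz₀ hz using hloc
  let Z : ℝ → E := fun t => z ⌈t - τ⌉₊ t
  have hZ : ∀ n : ℕ, EqOn Z (z n) (Icc τ (τ + n)) := fun n t ht => by
    have hceil : ⌈t - τ⌉₊ ≤ n := Nat.ceil_le.2 (sub_le_iff_le_add'.2 ht.2)
    refine eqOn_Icc_of_hasDerivWithinAt_Icc hlip (by gcongr) (hz _) (hz n)
      ((hz₀ _).trans (hz₀ n).symm) ⟨ht.1, ?_⟩
    exact sub_le_iff_le_add'.1 (Nat.le_ceil _)
  refine ⟨Z, hz₀ _, fun t ht => ?_⟩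
  obtain ⟨n, hn⟩ := exists_nat_gt (t - τ)
  have htn : t ∈ Ico τ (τ + n) := ⟨ht, sub_lt_iff_lt_add'.1 hn⟩
  have hderiv := (hz n t (Ico_subset_Icc_self htn)).congr (hZ n) (hZ n (Ico_subset_Icc_self htn))
  rw [← hZ n (Ico_subset_Icc_self htn)] at hderiv
  exact hderiv.mono_of_mem_nhdsWithin (inter_mem_nhdsWithin (Ici τ) (Iic_mem_nhds htn.2))

end GlobalExistence

section SpatiallyConstantSolutions

lemma exists_eq_exp_mul_add_integral {F : ℝ → ℝ → ℝ} {K : ℝ≥0} {a : ℝ}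
    (hF : Continuous (Function.uncurry F)) (hlip : ∀ t, LipschitzWith K (F t))
    (hFa : ∀ t z, |F t z| ≤ a) (τ c : ℝ) :
    ∃ v : ℝ → ℝ, ∀ t ≥ τ, v t = Real.exp (-(t - τ)) * c +
      ∫ s in τ..t, Real.exp (-(t - s)) * F s (v s) := by
  let f : ℝ → ℝ → ℝ := fun t z => Real.exp t * F t (Real.exp (-t) * z)
  have hf : Continuous (Function.uncurry f) :=
    (Real.continuous_exp.comp continuous_fst).mul (hF.comp (by fun_prop :
      Continuous fun q : ℝ × ℝ => (q.1, Real.exp (-q.1) * q.2)))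
  have hf_lip : ∀ t, LipschitzWith K (f t) := fun t => .of_dist_le_mul fun y z => by
    calc dist (f t y) (f t z)
        = Real.exp t * dist (F t (Real.exp (-t) * y)) (F t (Real.exp (-t) * z)) := by
          rw [Real.dist_eq, ← mul_sub, abs_mul, Real.abs_exp, Real.dist_eq]
      _ ≤ Real.exp t * (K * dist (Real.exp (-t) * y) (Real.exp (-t) * z)) := by
          gcongr
          exact (hlip t).dist_le_mul _ _
      _ = K * dist y z := by
          rw [Real.dist_eq, ← mul_sub, abs_mul, Real.abs_exp, mul_left_comm,
            ← mul_assoc (Real.exp t), ← Real.exp_add, add_neg_cancel, Real.exp_zero, one_mul,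
            Real.dist_eq]
  have hf_bdd : ∀ T, ∃ C, ∀ t ∈ Icc τ T, ∀ z, ‖f t z‖ ≤ C := fun T =>
    ⟨Real.exp T * a, fun t ht z => by
      rw [norm_mul, Real.norm_of_nonneg (Real.exp_pos t).le]
      exact mul_le_mul (Real.exp_le_exp.2 ht.2) (hFa _ _) (norm_nonneg _) (Real.exp_pos T).le⟩
  obtain ⟨z, hzτ, hz⟩ := exists_hasDerivWithinAt_Ici hf hf_lip hf_bdd (Real.exp τ * c)
  refine ⟨fun t => Real.exp (-t) * z t, fun t ht => ?_⟩
  have hz_cont : ContinuousOn z (Icc τ t) := fun s hs =>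
    (hz s hs.1).continuousWithinAt.mono Icc_subset_Ici_self
  have hftc : ∫ s in τ..t, f s (z s) = z t - z τ :=
    intervalIntegral.integral_eq_sub_of_hasDeriv_right_of_le ht hz_cont
      (fun s hs => (hz s hs.1.le).mono (Ioi_subset_Ici hs.1.le))
      ((hf.comp_continuousOn (continuousOn_id.prodMk hz_cont)).intervalIntegrable_of_Icc ht)
  rw [integral_exp_neg_sub_mul, hftc, hzτ, mul_sub, ← mul_assoc, ← Real.exp_add]
  ring_nf

variable {N : ℕ} {p : ℝ≥0∞} {μ : Measure (Euc N)} [IsFiniteMeasure μ] {g h : ℝ → ℝ} {K : ℝ≥0}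
  {a : ℝ}

lemma exists_isTrajectory_const (J : Euc N → ℝ) (hg : LipschitzWith K g) (hga : ∀ s, |g s| ≤ a)
    (hh : Continuous h) (β τ c : ℝ) :
    ∃ v : ℝ → ℝ, v τ = c ∧ IsTrajectory p μ J g (fun s _ => h s) β τ (fun t _ => v t) := by
  let F : ℝ → ℝ → ℝ := fun s z => g (β * ((∫ y, J y) * z) + β * h s)
  have hF : Continuous (Function.uncurry F) := hg.continuous.comp (by fun_prop)
  have hF_lip : ∀ s, LipschitzWith (K * ‖β * ∫ y, J y‖₊) (F s) := fun s =>
    hg.comp (.of_dist_le_mul fun y z => by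
      rw [dist_add_right, ← mul_assoc, ← mul_assoc, dist_eq_norm, ← mul_sub, norm_mul, coe_nnnorm,
        dist_eq_norm])
  obtain ⟨v, hv⟩ := exists_eq_exp_mul_add_integral hF hF_lip (fun _ _ => hga _) τ c
  have hvτ : v τ = c := by simpa using hv τ le_rfl
  refine ⟨v, hvτ, fun t ht x => ?_, fun t _ => memLp_const _⟩
  simp_rw [conv_const, hvτ]
  exact hv t ht

end SpatiallyConstantSolutions

section ProcessSets

variable {N : ℕ} {p : ℝ≥0∞} {J : Euc N → ℝ} {g h : ℝ → ℝ} {K : ℝ≥0} {β a : ℝ}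

lemma IsTrajectory.eLpNorm_sub_eq {μ : Measure (Euc N)} {k : ℝ → ℝ → ℝ} {τ : ℝ}
    {u : ℝ → Euc N → ℝ} (hu : IsTrajectory p μ J g k β τ u) {w : Euc N → ℝ} {t : ℝ}
    (hw : w =ᵐ[μ] u t) :
    eLpNorm (w - fun x => u t x - Real.exp (-(t - τ)) * u τ x) p μ =
      ENNReal.ofReal (Real.exp (-(t - τ)) * lpNorm (u τ) p μ) := by
  have hdiff : w - (fun x => u t x - Real.exp (-(t - τ)) * u τ x) =ᵐ[μ]
      Real.exp (-(t - τ)) • u τ := by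
    filter_upwards [hw] with x hx
    rw [Pi.sub_apply, hx, sub_sub_cancel, Pi.smul_apply, smul_eq_mul]
  rw [eLpNorm_congr_ae hdiff, eLpNorm_const_smul, Real.enorm_of_nonneg (Real.exp_pos _).le,
    ← ofReal_lpNorm (hu.memLp τ le_rfl), ← ENNReal.ofReal_mul (Real.exp_pos _).le]

lemma IsTrajectory.exists_subseq_tendsto_Lp [Fact (1 ≤ p)] (hp : p ≠ ⊤) {μ : Measure (Euc N)}
    [IsProbabilityMeasure μ] (hμ : DominatesVolumeOnCompacts μ) (hJ : Continuous J)
    (hJs : HasCompactSupport J) (hg : UniformContinuous g) (hga : ∀ s, |g s| ≤ a)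
    (hh : Continuous h) {τ : ℕ → ℝ} {u : ℕ → ℝ → Euc N → ℝ} {M t : ℝ}
    (hu : ∀ n, IsTrajectory p μ J g (fun s _ => h s) β (τ n) (u n))
    (hM : ∀ n, lpNorm (u n (τ n)) p μ ≤ M) (hτt : ∀ n, τ n ≤ t) (hτ : Tendsto τ atTop atBot)
    {w : ℕ → Lp ℝ p μ} (hw : ∀ n, w n =ᵐ[μ] u n t) :
    ∃ W, ∃ φ : ℕ → ℕ, StrictMono φ ∧ Tendsto (w ∘ φ) atTop (𝓝 W) := by
  have hdecay : Tendsto (fun n => ENNReal.ofReal (Real.exp (-(t - τ n)) * M)) atTop (𝓝 0) := by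
    simpa only [zero_mul, ENNReal.ofReal_zero, Function.comp_apply] using
      ENNReal.tendsto_ofReal (((tendsto_exp_neg_sub_atBot t).comp hτ).mul_const M)
  refine exists_subseq_tendsto_Lp_of_equicontinuous hp
    (v := fun n x => u n t x - Real.exp (-(t - τ n)) * u n (τ n) x)
    (fun n => ((hu n).memLp t (hτt n)).1.sub (((hu n).memLp _ le_rfl).1.const_mul _))
    (fun n x => (hu n).isSolution.abs_sub_exp_mul_le hga (hτt n) x)
    (equicontinuous_sub hu Fact.out hμ hJ hJs hg hga hh hM hτt)
    (tendsto_of_tendsto_of_tendsto_of_le_of_le tendsto_const_nhds hdecay (fun _ => zero_le)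
      fun n => ?_)
  rw [(hu n).eLpNorm_sub_eq (hw n)]
  gcongr
  exact hM n

variable {ρ : Euc N → ℝ} {r M s t τ : ℝ}

lemma mem_procSet_iff (hρm : Measurable ρ) (hρ : ∀ x, 0 < ρ x) (hp0 : p ≠ 0) (hp : p ≠ ⊤)
    {w : Lp ℝ p (wMeasure ρ)} :
    w ∈ procSet p ρ J g h β r t τ ↔
      ∃ u, IsTrajectory p (wMeasure ρ) J g (fun s _ => h s) β τ u ∧
        lpNorm (u τ) p (wMeasure ρ) ≤ r ∧ ⇑w =ᵐ[wMeasure ρ] u t := by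
  have hmem {v : Euc N → ℝ} := memWLp_iff_memLp hρm hρ hp0 hp (u := v)
  have hnorm {v : Euc N → ℝ} (hv : MemLp v p (wMeasure ρ)) :=
    wnorm_eq_lpNorm hρm (fun x => (hρ x).le) hp0 hp hv.1
  constructor
  · rintro ⟨u, uτ, -, hr, hu, hsol, hw⟩
    obtain rfl := hsol.initial_eq
    exact ⟨u, ⟨hsol, fun t' ht' => hmem.1 (hu t' ht')⟩,
      hnorm (hmem.1 (hu τ le_rfl)) ▸ hr, hw⟩
  · rintro ⟨u, hu, hr, hw⟩
    exact ⟨u, u τ, hmem.2 (hu.memLp τ le_rfl), (hnorm (hu.memLp τ le_rfl)).trans_le hr,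
      fun t' ht' => hmem.2 (hu.memLp t' ht'), hu.isSolution, hw⟩

lemma IsSolution.mem_procSet (hρm : Measurable ρ) (hρ : ∀ x, 0 < ρ x) (hp0 : p ≠ 0) (hp : p ≠ ⊤)
    {d w : Lp ℝ p (wMeasure ρ)} {u : ℝ → Euc N → ℝ}
    (hsol : IsSolution J g (fun s _ => h s) β τ d u) (hu : ∀ t' ≥ τ, MemWLp p.toReal ρ (u t'))
    (hd : ‖d‖ ≤ r) (hw : ⇑w =ᵐ[wMeasure ρ] u t) : w ∈ procSet p ρ J g h β r t τ := by
  refine ⟨u, d, (memWLp_iff_memLp hρm hρ hp0 hp).2 (Lp.memLp d), ?_, hu, hsol, hw⟩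
  have hmeas := Lp.aestronglyMeasurable d
  rwa [wnorm_eq_lpNorm hρm (fun x => (hρ x).le) hp0 hp hmeas, ← toReal_eLpNorm hmeas,
    ← Lp.norm_def]

variable [Fact (1 ≤ p)]

lemma pullbackAsymptoticallyCompact_procSet (hp : p ≠ ⊤) (hρc : Continuous ρ)
    (hρ : ∀ x, 0 < ρ x) (hρ1 : ∫ x, ρ x = 1) (hJ : Continuous J) (hJs : HasCompactSupport J)
    (hg : UniformContinuous g) (hga : ∀ s, |g s| ≤ a) (hh : Continuous h) (β M t : ℝ) :
    PullbackAsymptoticallyCompact (procSet p ρ J g h β M t) := by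
  have := isProbabilityMeasure_wMeasure (fun x => (hρ x).le) hρ1
  intro τ w hτ hw
  choose u hu hM hwu using fun n => (mem_procSet_iff hρc.measurable hρ
    (zero_lt_one.trans_le Fact.out).ne' hp).1 (hw n)
  obtain ⟨φ, hφ, hφt⟩ := extraction_of_eventually_atTop (hτ.eventually (eventually_le_atBot t))
  obtain ⟨W, ψ, hψ, hW⟩ := IsTrajectory.exists_subseq_tendsto_Lp hp
    (dominatesVolumeOnCompacts_wMeasure hρc hρ) hJ hJs hg hga hh (fun n => hu (φ n))
    (fun n => hM (φ n)) hφt (hτ.comp hφ.tendsto_atTop) fun n => hwu (φ n)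
  exact ⟨W, φ ∘ ψ, hφ.comp hψ, hW⟩

lemma procSet_subset_procSet (hp : p ≠ ⊤) (hρc : Continuous ρ) (hρ : ∀ x, 0 < ρ x)
    (hρ1 : ∫ x, ρ x = 1) (hJ : Continuous J) (hJs : HasCompactSupport J) (hg : Continuous g)
    (hga : ∀ s, |g s| ≤ a) (hh : Continuous h) (hτs : τ ≤ s)
    (hr : Real.exp (-(s - τ)) * M + a ≤ r) :
    procSet p ρ J g h β M t τ ⊆ procSet p ρ J g h β r t s := by
  have := isProbabilityMeasure_wMeasure (fun x => (hρ x).le) hρ1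
  have hp1 : 1 ≤ p := Fact.out
  intro w hw
  rw [mem_procSet_iff hρc.measurable hρ (zero_lt_one.trans_le hp1).ne' hp] at hw ⊢
  obtain ⟨u, hu, hM, hwu⟩ := hw
  refine ⟨u, hu.restart hp1 (dominatesVolumeOnCompacts_wMeasure hρc hρ) hJ hJs hg hga
    (by fun_prop) hτs, ?_, hwu⟩
  exact (hu.lpNorm_le hp1 hga hτs).trans (le_trans (by gcongr) hr)

lemma procSet_subset_closedBall (hp : p ≠ ⊤) (hρm : Measurable ρ) (hρ : ∀ x, 0 < ρ x)
    (hρ1 : ∫ x, ρ x = 1) (hga : ∀ s, |g s| ≤ a) (hτt : τ ≤ t) :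
    procSet p ρ J g h β M t τ ⊆ Metric.closedBall 0 (Real.exp (-(t - τ)) * M + a) := by
  have := isProbabilityMeasure_wMeasure (fun x => (hρ x).le) hρ1
  have hp1 : 1 ≤ p := Fact.out
  intro w hw
  obtain ⟨u, hu, hM, hwu⟩ := (mem_procSet_iff hρm hρ (zero_lt_one.trans_le hp1).ne' hp).1 hw
  calc dist w 0 = lpNorm (u t) p (wMeasure ρ) := by
        rw [dist_zero_right, Lp.norm_def, eLpNorm_congr_ae hwu, toReal_eLpNorm (hu.memLp t hτt).1]
    _ ≤ Real.exp (-(t - τ)) * lpNorm (u τ) p (wMeasure ρ) + a := hu.lpNorm_le hp1 hga hτt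
    _ ≤ Real.exp (-(t - τ)) * M + a := by gcongr

lemma procSet_nonempty (hp : p ≠ ⊤) (hρm : Measurable ρ) (hρ : ∀ x, 0 < ρ x)
    (hρ1 : ∫ x, ρ x = 1) (J : Euc N → ℝ) (hg : LipschitzWith K g) (hga : ∀ s, |g s| ≤ a)
    (hh : Continuous h) (β : ℝ) (hr : 0 ≤ r) (t τ : ℝ) :
    (procSet p ρ J g h β r t τ).Nonempty := by
  have := isProbabilityMeasure_wMeasure (fun x => (hρ x).le) hρ1
  obtain ⟨v, hvτ, hv⟩ := exists_isTrajectory_const (p := p) (μ := wMeasure ρ) J hg hga hh β τ 0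
  refine ⟨(memLp_const (v t)).toLp, (mem_procSet_iff hρm hρ
    (zero_lt_one.trans_le Fact.out).ne' hp).2 ⟨_, hv, ?_, MemLp.coeFn_toLp _⟩⟩
  rwa [hvτ, lpNorm_fun_zero]

lemma eventually_exp_mul_add_lt (har : a < r) (M t : ℝ) :
    ∀ᶠ τ in atBot, Real.exp (-(t - τ)) * M + a < r := by
  have hlim : Tendsto (fun τ => Real.exp (-(t - τ)) * M + a) atBot (𝓝 a) := by
    simpa only [zero_mul, zero_add] using
      ((tendsto_exp_neg_sub_atBot t).mul_const M).add_const a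
  exact hlim.eventually (gt_mem_nhds har)

lemma eventually_procSet_subset_biUnion (hp : p ≠ ⊤) (hρc : Continuous ρ) (hρ : ∀ x, 0 < ρ x)
    (hρ1 : ∫ x, ρ x = 1) (hJ : Continuous J) (hJs : HasCompactSupport J) (hg : Continuous g)
    (hga : ∀ s, |g s| ≤ a) (hh : Continuous h) (har : a < r) (β M t s : ℝ) :
    ∀ᶠ τ in atBot, procSet p ρ J g h β M t τ ⊆ ⋃ σ ∈ Iic s, procSet p ρ J g h β r t σ := by
  filter_upwards [eventually_le_atBot s, eventually_exp_mul_add_lt har M s] with τ hτs hr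
  exact (procSet_subset_procSet hp hρc hρ hρ1 hJ hJs hg hga hh hτs hr.le).trans
    (subset_biUnion_of_mem (u := procSet p ρ J g h β r t) (mem_Iic.2 le_rfl))

lemma pullbackLimit_procSet_subset_closedBall (hp : p ≠ ⊤) (hρm : Measurable ρ)
    (hρ : ∀ x, 0 < ρ x) (hρ1 : ∫ x, ρ x = 1) (hga : ∀ s, |g s| ≤ a) :
    pullbackLimit (procSet p ρ J g h β M t) t ⊆ Metric.closedBall 0 a := by
  intro w hw
  refine Metric.mem_closedBall.2 (le_of_forall_gt_imp_ge_of_dense fun r hr => ?_)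
  refine Metric.mem_closedBall.1 (pullbackLimit_subset_of_eventually Metric.isClosed_closedBall
    ?_ t hw)
  filter_upwards [eventually_le_atBot t, eventually_exp_mul_add_lt hr M t] with τ hτt hτr
  exact (procSet_subset_closedBall hp hρm hρ hρ1 hga hτt).trans
    (Metric.closedBall_subset_closedBall hτr.le)

end ProcessSets

theorem stmt11_general {N : ℕ} {p : ℝ≥0∞} [Fact (1 ≤ p)] (hp : p ≠ ⊤)
    {ρ : Euc N → ℝ} (hρc : Continuous ρ) (hρ : ∀ x, 0 < ρ x) (hρ1 : ∫ x, ρ x = 1) (β : ℝ)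
    {J : Euc N → ℝ} (hJ : Continuous J) (hJs : HasCompactSupport J)
    {g : ℝ → ℝ} {K : ℝ≥0} (hg : LipschitzWith K g) {a : ℝ} (hga : ∀ s, |g s| ≤ a)
    {h : ℝ → ℝ} (hh : Continuous h) {ε : ℝ} (hε : 0 < ε) (t : ℝ) :
    (attrSet p ρ J g h β (a + ε) t).Nonempty ∧
    IsCompact (attrSet p ρ J g h β (a + ε) t) ∧
    (∀ w ∈ attrSet p ρ J g h β (a + ε) t, ‖w‖ ≤ a) ∧
    (∀ D : Set (Lp ℝ p (wMeasure ρ)), Bornology.IsBounded D →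
      ∀ δ > 0, ∃ T : ℝ, ∀ τ ≤ T, ∀ d ∈ D, ∀ u : ℝ → Euc N → ℝ,
        (∀ t' ≥ τ, MemWLp p.toReal ρ (u t')) →
        IsSolution J g (fun s _ => h s) β τ (⇑d) u →
        ∀ w : Lp ℝ p (wMeasure ρ), ⇑w =ᵐ[wMeasure ρ] u t →
          Metric.infDist w (attrSet p ρ J g h β (a + ε) t) < δ) := by
  have hgu := hg.uniformContinuous
  have hcompact (M : ℝ) :=
    pullbackAsymptoticallyCompact_procSet hp hρc hρ hρ1 hJ hJs hgu hga hh β M t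
  have hr : 0 ≤ a + ε := add_nonneg ((abs_nonneg _).trans (hga 0)) hε.le
  refine ⟨(hcompact _).nonempty_pullbackLimit
    (procSet_nonempty hp hρc.measurable hρ hρ1 J hg hga hh β hr t) t,
    (hcompact _).isCompact_pullbackLimit t, fun w hw => mem_closedBall_zero_iff.1
      (pullbackLimit_procSet_subset_closedBall hp hρc.measurable hρ hρ1 hga hw), ?_⟩
  intro D hD δ hδ
  obtain ⟨M, hM⟩ := hD.exists_norm_le
  obtain ⟨T, hT⟩ := eventually_atBot.1 <| (hcompact M).eventually_infDist_pullbackLimit_lt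
    (fun s _ => eventually_procSet_subset_biUnion hp hρc hρ hρ1 hJ hJs hgu.continuous hga hh
      (lt_add_of_pos_right a hε) β M t s) hδ
  exact ⟨T, fun τ hτ d hd u hu hsol w hw => hT τ hτ w <| hsol.mem_procSet hρc.measurable hρ
    (zero_lt_one.trans_le Fact.out).ne' hp hu (hM d hd) hw⟩

theorem stmt11 {N : ℕ} (p : ℝ≥0∞) [Fact (1 ≤ p)] (hp : p ≠ ⊤)
    (ρ : Euc N → ℝ) (hρc : Continuous ρ) (hρpos : ∀ x, 0 < ρ x) (hρ1 : ∫ x, ρ x = 1)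
    (β : ℝ) (hβ : 0 < β)
    (J : Euc N → ℝ) (hJC1 : ContDiff ℝ 1 J) (hJnn : ∀ x, 0 ≤ J x)
    (hJeven : ∀ x, J (-x) = J x)
    (hJsupp : ∀ x : Euc N, 1 < ‖x‖ → J x = 0) (hJ1 : ∫ x, J x = 1)
    (g : ℝ → ℝ) (hgC1 : ContDiff ℝ 1 g)
    (ℓg : ℝ) (hgLip : ∀ s₁ s₂, |g s₁ - g s₂| ≤ ℓg * |s₁ - s₂|) (hg0 : g 0 = 0)
    (a : ℝ) (hga : ∀ s, |g s| ≤ a)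
    (k₁ : ℝ) (hg'Lip : ∀ s₁ s₂, |deriv g s₁ - deriv g s₂| ≤ k₁ * |s₁ - s₂|)
    (hstar : ℝ) (h : ℝ → ℝ) (hhc : Continuous h) (hh : ∀ t, h t ∈ Ico (0 : ℝ) hstar)
    (ε : ℝ) (hε : 0 < ε) (t : ℝ) :
    (attrSet p ρ J g h β (a + ε) t).Nonempty ∧
    IsCompact (attrSet p ρ J g h β (a + ε) t) ∧
    (∀ w ∈ attrSet p ρ J g h β (a + ε) t, ‖w‖ ≤ a) ∧
    (∀ D : Set (Lp ℝ p (wMeasure ρ)), Bornology.IsBounded D →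
      ∀ δ > 0, ∃ T : ℝ, ∀ τ ≤ T, ∀ d ∈ D, ∀ u : ℝ → Euc N → ℝ,
        (∀ t' ≥ τ, MemWLp p.toReal ρ (u t')) →
        IsSolution J g (fun s _ => h s) β τ (⇑d) u →
        ∀ w : Lp ℝ p (wMeasure ρ), ⇑w =ᵐ[wMeasure ρ] u t →
          Metric.infDist w (attrSet p ρ J g h β (a + ε) t) < δ) := by
  exact stmt11_general hp hρc hρpos hρ1 β hJC1.continuous (.intro (isCompact_closedBall 0 1)
    fun x hx => hJsupp x (by simpa using hx)) (.of_dist_le' hgLip) hga hhc hε t
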